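/- arXiv:1710.02288 — 5 statements merged into one kernel-verified Lean document; each statement's English description precedes it below -/
import Mathlib

section
/- Let 0 ≤ j ≤ r − 1 and set k_j = g − d + α_j + j. Then the diagram λ^{j+1} and its subdiagram μ_j meet the diagonal S_{k_j} in exactly the same boxes: λ^{j+1} ∩ S_{k_j} = μ_j ∩ S_{k_j}. -/
/-!
The diagonal `S_{k_j}` passes through the outer corner of `λ_j ∩ λ_{j+1}`, whose coordinates are the
width of `λ_j` and the height of `λ_{j+1}`. Along a diagonal through a point `(a, b)` the conditions
`x ≤ a` and `y ≤ b` are equivalent. Hence each `λ_i` with `i ≤ j`, being no wider than `λ_j`, meets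
the diagonal inside `λ_{j+1}`, and `λ_{j+1}` meets it inside `λ_j`.
-/

open Set

theorem setOf_fst_snd_bounds_eq_Icc {α β : Type*} [Preorder α] [Preorder β] (c u : α × β) :
    {p : α × β | c.1 ≤ p.1 ∧ c.2 ≤ p.2 ∧ p.1 ≤ u.1 ∧ p.2 ≤ u.2} = Icc c u := by
  ext p
  simp only [mem_ofPred_eq, mem_Icc, Prod.le_def, and_assoc]

theorem union_inter_eq_inter_inter {γ : Type*} {s t u : Set γ}
    (hs : s ∩ u ⊆ t) (ht : t ∩ u ⊆ s) : (s ∪ t) ∩ u = s ∩ t ∩ u := by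
  have hst : s ∩ u = t ∩ u :=
    (subset_inter hs inter_subset_right).antisymm (subset_inter ht inter_subset_right)
  rw [union_inter_distrib_right, inter_inter_distrib_right, hst, union_self, inter_self]

section Diagonal

variable {G : Type*} [AddCommGroup G]

/-- The diagonal `S_k` of boxes `(x, y)` of content `x - y = k`, with coordinates in an arbitrary
commutative group. -/
def contentDiagonal (k : G) : Set (G × G) := {p | p.1 - p.2 = k}

variable [PartialOrder G] [IsOrderedAddMonoid G] {a b a' b' : G} {c p : G × G}

theorem fst_le_iff_snd_le_of_mem_contentDiagonal (hp : p ∈ contentDiagonal (a - b)) :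
    p.1 ≤ a ↔ p.2 ≤ b := by
  have hdiff : p.1 - a = p.2 - b := sub_eq_sub_iff_sub_eq_sub.mp hp
  rw [← sub_nonpos, hdiff, sub_nonpos]

theorem Icc_inter_contentDiagonal_subset (h : a' ≤ a ∨ b' ≤ b) :
    Icc c (a', b') ∩ contentDiagonal (a - b) ⊆ Icc c (a, b) := by
  rintro p ⟨⟨hc, hpa, hpb⟩, hp⟩
  have hiff := fst_le_iff_snd_le_of_mem_contentDiagonal hp
  rcases h with ha | hb
  · have hxa : p.1 ≤ a := hpa.trans ha
    exact ⟨hc, hxa, hiff.mp hxa⟩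
  · have hyb : p.2 ≤ b := hpb.trans hb
    exact ⟨hc, hiff.mpr hyb, hyb⟩

theorem diagonal_intersection_general (c : G × G) {a b : ℕ → G} {j : ℕ}
    (ha : MonotoneOn a (Iic (j + 1))) (hb : b (j + 1) ≤ b j) :
    (⋃ i ∈ Finset.range (j + 2), Icc c (a i, b i)) ∩ contentDiagonal (a j - b (j + 1)) =
      ((⋃ i ∈ Finset.range (j + 1), Icc c (a i, b i)) ∩ Icc c (a (j + 1), b (j + 1))) ∩
        contentDiagonal (a j - b (j + 1)) := by
  have corner_le_last : (a j, b (j + 1)) ≤ (a (j + 1), b (j + 1)) :=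
    ⟨ha j.le_succ self_mem_Iic j.le_succ, le_rfl⟩
  have corner_le_prev : (a j, b (j + 1)) ≤ (a j, b j) := ⟨le_rfl, hb⟩
  rw [Finset.range_add_one (n := j + 1), Finset.set_biUnion_insert, union_comm]
  apply union_inter_eq_inter_inter
  · rw [iUnion₂_inter]
    refine iUnion₂_subset fun i hi => ?_
    have hij : i ≤ j := Finset.mem_range_succ_iff.mp hi
    have hai : a i ≤ a j := ha (hij.trans j.le_succ) j.le_succ hij
    exact (Icc_inter_contentDiagonal_subset (.inl hai)).trans (Icc_subset_Icc_right corner_le_last)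
  · have last_subset_prev :
        Icc c (a (j + 1), b (j + 1)) ∩ contentDiagonal (a j - b (j + 1)) ⊆ Icc c (a j, b j) :=
      (Icc_inter_contentDiagonal_subset (.inr le_rfl)).trans (Icc_subset_Icc_right corner_le_prev)
    exact last_subset_prev.trans
      (subset_biUnion_of_mem (u := fun i => Icc c (a i, b i)) (Finset.self_mem_range_succ j))

end Diagonal

/-- With `λ_i` the rectangle `{(x,y) : x ≤ g−d+r+α_i, y ≤ r+1−i}`,
`λ^j = λ_0 ∪ ⋯ ∪ λ_j`, `μ_j = λ^j ∩ λ_{j+1}`, `S_k = {(x,y) : x − y = k}` and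
`k_j = g − d + α_j + j`, one has `λ^{j+1} ∩ S_{k_j} = μ_j ∩ S_{k_j}`. -/
theorem diagonal_intersection (g d : ℤ) (r : ℕ) (hrd : (r : ℤ) ≤ d) (hgdr : 0 ≤ g - d + r)
    (α : ℕ → ℤ) (hαmono : ∀ i j : ℕ, i ≤ j → j ≤ r → α i ≤ α j)
    (hαbd : ∀ i : ℕ, i ≤ r → 0 ≤ α i ∧ α i ≤ d - r)
    (lam : ℕ → Set (ℤ × ℤ))
    (hlam : ∀ i : ℕ, lam i =
      {p : ℤ × ℤ | 1 ≤ p.1 ∧ 1 ≤ p.2 ∧ p.1 ≤ g - d + r + α i ∧ p.2 ≤ (r : ℤ) + 1 - i})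
    (j : ℕ) (hj : j + 1 ≤ r) :
    (⋃ i ∈ Finset.range (j + 2), lam i) ∩ {p : ℤ × ℤ | p.1 - p.2 = g - d + α j + j} =
      ((⋃ i ∈ Finset.range (j + 1), lam i) ∩ lam (j + 1)) ∩
        {p : ℤ × ℤ | p.1 - p.2 = g - d + α j + j} := by
  have hwidth : MonotoneOn (fun i => g - d + r + α i) (Iic (j + 1)) := fun i _ k hk hik =>
    add_le_add_right (hαmono i k hik (le_trans hk hj)) _
  have hheight : (r : ℤ) + 1 - (j + 1 : ℕ) ≤ r + 1 - j := by omega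
  have hcontent : g - d + α j + j = g - d + r + α j - (r + 1 - (j + 1 : ℕ)) := by
    push_cast
    ring
  have hrect : lam = fun i => Icc (1, 1) (g - d + r + α i, (r : ℤ) + 1 - i) :=
    funext fun i => (hlam i).trans (setOf_fst_snd_bounds_eq_Icc (1, 1) (_, _))
  rw [hcontent, hrect]
  exact diagonal_intersection_general (1, 1) (b := fun i => (r : ℤ) + 1 - i) hwidth hheight
end

section
/- Let g ≥ 2, let m = (m_2, …, m_g) be a generic torsion profile, and let t be an m-displacement tableau on a Young diagram λ. Then t is injective. -/
/-- A Young diagram: a finite set of boxes `(x,y) ∈ ℤ_{>0} × ℤ_{>0}` which is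
downward closed. -/
def IsYoungDiagram (lam : Set (ℤ × ℤ)) : Prop :=
  lam.Finite ∧ (∀ p ∈ lam, 1 ≤ p.1 ∧ 1 ≤ p.2) ∧
    ∀ p ∈ lam, ∀ x' y' : ℤ, 1 ≤ x' → x' ≤ p.1 → 1 ≤ y' → y' ≤ p.2 → (x', y') ∈ lam

/-- An `m`-displacement tableau on `lam`: a function `t : lam → {1,…,g}` strictly
increasing along each row and each column, such that any two boxes with the same
value `i ≥ 2` lie on diagonals congruent mod `m i` (congruence mod `0` is equality). -/
def IsDisplacementTableau (g : ℕ) (m : ℕ → ℕ) (lam : Set (ℤ × ℤ)) (t : ℤ × ℤ → ℕ) : Prop :=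
  (∀ p ∈ lam, 1 ≤ t p ∧ t p ≤ g) ∧
  (∀ p ∈ lam, ∀ q ∈ lam, p.2 = q.2 → p.1 < q.1 → t p < t q) ∧
  (∀ p ∈ lam, ∀ q ∈ lam, p.1 = q.1 → p.2 < q.2 → t p < t q) ∧
  (∀ p ∈ lam, ∀ q ∈ lam, t p = t q → 2 ≤ t p →
    Int.ModEq (m (t p) : ℤ) (p.1 - p.2) (q.1 - q.2))

/-- A torsion profile `(m_2, …, m_g)` is generic if each entry is `0` or `> 2g − 2`. -/
def GenericProfile (g : ℕ) (m : ℕ → ℕ) : Prop :=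
  ∀ i : ℕ, 2 ≤ i → i ≤ g → m i = 0 ∨ 2 * g - 2 < m i

/-! A box `(x, y)` ends a chain of `x + y - 1` boxes starting at `(1, 1)`, so its entry `i` is at
least `x + y - 1`, whence `|x - y| ≤ i - 1`. Two boxes with entry `i` therefore have contents
`x - y` differing by at most `2 * i - 2`, and a congruence between them modulo `0` or modulo a
larger integer is an equality. But boxes on a common diagonal are comparable in the product order,
along which the entries strictly increase. -/

/-- The content `x - y` of the box `(x, y)`, which indexes the diagonal containing it. -/
def boxContent (p : ℤ × ℤ) : ℤ := p.1 - p.2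

/-- A possibly infinite Young diagram: a downward closed set of boxes in the positive quadrant,
which is the set of boxes `p` with `1 ≤ p` in the product order of `ℤ × ℤ`. -/
structure IsLowerDiagram (lam : Set (ℤ × ℤ)) : Prop where
  one_le : ∀ ⦃p⦄, p ∈ lam → 1 ≤ p
  mem_of_le : ∀ ⦃p q⦄, p ∈ lam → 1 ≤ q → q ≤ p → q ∈ lam

theorem IsYoungDiagram.isLowerDiagram {lam : Set (ℤ × ℤ)} (hlam : IsYoungDiagram lam) :
    IsLowerDiagram lam where
  one_le p hp := hlam.2.1 p hp
  mem_of_le p q hp hq hqp := hlam.2.2 p hp q.1 q.2 hq.1 hqp.1 hq.2 hqp.2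

namespace IsLowerDiagram

variable {lam : Set (ℤ × ℤ)} {p : ℤ × ℤ}

theorem exists_mem_lt_of_ne_one (hlam : IsLowerDiagram lam) (hp : p ∈ lam) (hne : p ≠ 1) :
    ∃ q ∈ lam, q < p ∧ q.1 + q.2 + 1 = p.1 + p.2 := by
  obtain ⟨x, y⟩ := p
  obtain ⟨hx, hy⟩ : 1 ≤ x ∧ 1 ≤ y := hlam.one_le hp
  by_cases hx1 : x = 1
  · have hy1 : y ≠ 1 := fun hy1 ↦ hne (Prod.ext hx1 hy1)
    have hlt : (x, y - 1) < (x, y) := Prod.mk_lt_mk_iff_right.2 (by lia)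
    exact ⟨_, hlam.mem_of_le hp ⟨hx, show 1 ≤ y - 1 by lia⟩ hlt.le, hlt, by lia⟩
  · have hlt : (x - 1, y) < (x, y) := Prod.mk_lt_mk_iff_left.2 (by lia)
    exact ⟨_, hlam.mem_of_le hp ⟨show 1 ≤ x - 1 by lia, hy⟩ hlt.le, hlt, by lia⟩

theorem strictMonoOn_of_row_of_col {α : Type*} [Preorder α] {t : ℤ × ℤ → α}
    (hlam : IsLowerDiagram lam)
    (hrow : ∀ p ∈ lam, ∀ q ∈ lam, p.2 = q.2 → p.1 < q.1 → t p < t q)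
    (hcol : ∀ p ∈ lam, ∀ q ∈ lam, p.1 = q.1 → p.2 < q.2 → t p < t q) :
    StrictMonoOn t lam := by
  rintro ⟨x, y⟩ hp ⟨x', y'⟩ hq hlt
  obtain ⟨hx, hy⟩ : x ≤ x' ∧ y ≤ y' := hlt.le
  have hcorner : (x', y) ∈ lam :=
    hlam.mem_of_le hq ⟨(hlam.one_le hq).1, (hlam.one_le hp).2⟩ ⟨le_rfl, hy⟩
  rcases hx.eq_or_lt with rfl | hx
  · exact hcol _ hp _ hq rfl (Prod.mk_lt_mk_iff_right.1 hlt)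
  · have hstep : t (x, y) < t (x', y) := hrow _ hp _ hcorner rfl hx
    rcases hy.eq_or_lt with rfl | hy
    · exact hstep
    · exact hstep.trans (hcol _ hcorner _ hq rfl hy)

variable {t : ℤ × ℤ → ℕ}

theorem add_le_of_strictMonoOn (hlam : IsLowerDiagram lam) (ht : StrictMonoOn t lam)
    (hp : p ∈ lam) : p.1 + p.2 - 2 + t 1 ≤ t p := by
  induction h : t p using Nat.strong_induction_on generalizing p with
  | _ n ih =>
    by_cases hne : p = 1
    · subst hne
      simp [← h]
    · obtain ⟨q, hq, hqp, hsum⟩ := hlam.exists_mem_lt_of_ne_one hp hne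
      have hlt : t q < n := h ▸ ht hq hp hqp
      have hbound := ih _ hlt hq rfl
      lia

theorem abs_boxContent_lt (hlam : IsLowerDiagram lam) (ht : StrictMonoOn t lam)
    (hpos : ∀ p ∈ lam, 1 ≤ t p) (hp : p ∈ lam) : |boxContent p| < t p := by
  obtain ⟨hx, hy⟩ : 1 ≤ p.1 ∧ 1 ≤ p.2 := hlam.one_le hp
  have hone : 1 ≤ t 1 := hpos 1 (hlam.mem_of_le hp le_rfl (hlam.one_le hp))
  have hsum := hlam.add_le_of_strictMonoOn ht hp
  rw [boxContent, abs_lt]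
  lia

end IsLowerDiagram

theorem le_or_ge_of_boxContent_eq {p q : ℤ × ℤ} (h : boxContent p = boxContent q) :
    p ≤ q ∨ q ≤ p := by
  simp only [boxContent, Prod.le_def] at h ⊢
  lia

theorem eq_of_strictMonoOn_of_boxContent_eq {α : Type*} [Preorder α] {lam : Set (ℤ × ℤ)}
    {t : ℤ × ℤ → α} (ht : StrictMonoOn t lam) {p q : ℤ × ℤ} (hp : p ∈ lam) (hq : q ∈ lam)
    (hpq : t p = t q) (hcontent : boxContent p = boxContent q) : p = q := by
  rcases le_or_ge_of_boxContent_eq hcontent with hle | hle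
  · exact hle.eq_of_not_lt fun hlt ↦ (ht hp hq hlt).ne hpq
  · exact (hle.eq_of_not_lt fun hlt ↦ (ht hq hp hlt).ne' hpq).symm

theorem int_eq_of_modEq_of_abs_sub_lt {n a b : ℤ} (hab : a ≡ b [ZMOD n])
    (hn : n = 0 ∨ |b - a| < n) : a = b := by
  rcases hn with rfl | hlt
  · exact Int.modEq_zero_iff.1 hab
  · exact (sub_eq_zero.1 (Int.eq_zero_of_abs_lt_dvd hab.dvd hlt)).symm

theorem displacement_tableau_injective_general {lam : Set (ℤ × ℤ)} (hlam : IsLowerDiagram lam)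
    {t : ℤ × ℤ → ℕ} (hpos : ∀ p ∈ lam, 1 ≤ t p) (ht : StrictMonoOn t lam) {m : ℕ → ℕ}
    (hm : ∀ p ∈ lam, 2 ≤ t p → m (t p) = 0 ∨ 2 * t p - 2 < m (t p))
    (hmod : ∀ p ∈ lam, ∀ q ∈ lam, t p = t q → 2 ≤ t p →
      boxContent p ≡ boxContent q [ZMOD m (t p)]) :
    Set.InjOn t lam := by
  intro p hp q hq hpq
  have hdist : |boxContent q - boxContent p| ≤ 2 * (t p : ℤ) - 2 := by
    have hp_lt := hlam.abs_boxContent_lt ht hpos hp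
    have hq_lt := hlam.abs_boxContent_lt ht hpos hq
    have htri := abs_sub (boxContent q) (boxContent p)
    lia
  refine eq_of_strictMonoOn_of_boxContent_eq ht hp hq hpq ?_
  rcases (hpos p hp).eq_or_lt with hone | htwo
  · have hzero : |boxContent q - boxContent p| ≤ 0 := by simpa [← hone] using hdist
    exact (sub_eq_zero.1 (abs_nonpos_iff.1 hzero)).symm
  · refine int_eq_of_modEq_of_abs_sub_lt (hmod p hp q hq hpq htwo) ?_
    exact (hm p hp htwo).imp (congrArg _) fun hlt ↦ hdist.trans_lt (by lia)

theorem IsDisplacementTableau.strictMonoOn {g : ℕ} {m : ℕ → ℕ} {lam : Set (ℤ × ℤ)}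
    {t : ℤ × ℤ → ℕ} (ht : IsDisplacementTableau g m lam t) (hlam : IsLowerDiagram lam) :
    StrictMonoOn t lam :=
  hlam.strictMonoOn_of_row_of_col ht.2.1 ht.2.2.1

theorem GenericProfile.eq_zero_or_lt {g : ℕ} {m : ℕ → ℕ} (hm : GenericProfile g m) {i : ℕ}
    (hi : 2 ≤ i) (hig : i ≤ g) : m i = 0 ∨ 2 * i - 2 < m i :=
  (hm i hi hig).imp_right fun h ↦ by lia

/-- For a generic torsion profile `m`, every `m`-displacement tableau
on a Young diagram is injective. -/
theorem displacement_tableau_injective (g : ℕ) (hg : 2 ≤ g) (m : ℕ → ℕ)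
    (hm : GenericProfile g m) (lam : Set (ℤ × ℤ)) (hlam : IsYoungDiagram lam)
    (t : ℤ × ℤ → ℕ) (ht : IsDisplacementTableau g m lam t) :
    ∀ p ∈ lam, ∀ q ∈ lam, t p = t q → p = q := by
  have hdiag := hlam.isLowerDiagram
  exact displacement_tableau_injective_general hdiag (fun p hp ↦ (ht.1 p hp).1)
    (ht.strictMonoOn hdiag) (fun p hp htwo ↦ hm.eq_zero_or_lt htwo (ht.1 p hp).2) ht.2.2.2
end

section
/- Let g ≥ 2 and let m = (m_2, …, m_g) be a generic torsion profile. Let t be an m-displacement tableau on a Young diagram λ and t' an m-displacement tableau on a Young diagram μ. Suppose (x,y) ∈ λ and (x',y') ∈ μ satisfy t(x,y) = t'(x',y'), and in case t(x,y) ≥ 2 suppose moreover x − y ≡ x' − y' (mod m_{t(x,y)}), where congruence mod 0 means equality. Then x − y = x' − y'. -/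
/-!
Walking from the corner `(1, 1)` to the box `(x, y)` along the bottom row and then up a column, the
entries start at 1 or more and increase at each of the `(x - 1) + (y - 1)` steps. Hence
`|x - y| ≤ x + y - 2 ≤ t (x, y) - 1`. So two boxes carrying the same symbol `i` lie on diagonals at
distance at most `2i - 2`, and a congruence modulo an integer larger than that forces the diagonals
to coincide.
-/

theorem monotoneOn_sub_id_of_strictMonoOn {f : ℤ → ℤ} {s : Set ℤ} (hs : s.OrdConnected)
    (hf : StrictMonoOn f s) : MonotoneOn (fun x ↦ f x - x) s := by
  refine monotoneOn_of_le_succ hs fun x _ hx hx' ↦ ?_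
  have hlt : f x < f (x + 1) := hf hx hx' (lt_add_one x)
  rw [Order.succ_eq_add_one]
  omega

theorem add_sub_le_of_strictMonoOn_Icc {f : ℤ → ℤ} {a b : ℤ} (hab : a ≤ b)
    (hf : StrictMonoOn f (Set.Icc a b)) : f a + (b - a) ≤ f b := by
  have hle : f a - a ≤ f b - b :=
    monotoneOn_sub_id_of_strictMonoOn Set.ordConnected_Icc hf
      (Set.left_mem_Icc.2 hab) (Set.right_mem_Icc.2 hab) hab
  omega

theorem add_add_sub_le_of_strictMonoOn_Icc {t : ℤ × ℤ → ℤ} {p q : ℤ × ℤ} (hpq : p ≤ q)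
    (ht : StrictMonoOn t (Set.Icc p q)) : t p + (q.1 - p.1) + (q.2 - p.2) ≤ t q := by
  have hrow : StrictMonoOn (t ∘ (·, p.2)) (Set.Icc p.1 q.1) :=
    ht.comp (fun _ _ _ _ hlt ↦ Prod.mk_lt_mk_iff_left.2 hlt)
      fun _ hx ↦ ⟨⟨hx.1, le_rfl⟩, ⟨hx.2, hpq.2⟩⟩
  have hcol : StrictMonoOn (t ∘ (q.1, ·)) (Set.Icc p.2 q.2) :=
    ht.comp (fun _ _ _ _ hlt ↦ Prod.mk_lt_mk_iff_right.2 hlt)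
      fun _ hy ↦ ⟨⟨hpq.1, hy.1⟩, ⟨le_rfl, hy.2⟩⟩
  calc t p + (q.1 - p.1) + (q.2 - p.2)
      ≤ t (q.1, p.2) + (q.2 - p.2) :=
        add_le_add_left (add_sub_le_of_strictMonoOn_Icc hpq.1 hrow) _
    _ ≤ t q := add_sub_le_of_strictMonoOn_Icc hpq.2 hcol

theorem abs_sub_lt_of_strictMonoOn_Icc_one {t : ℤ × ℤ → ℕ} {p : ℤ × ℤ} (hp : 1 ≤ p)
    (ht : StrictMonoOn t (Set.Icc 1 p)) (hpos : 1 ≤ t 1) : |p.1 - p.2| < t p := by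
  have hx : 1 ≤ p.1 := hp.1
  have hy : 1 ≤ p.2 := hp.2
  have hwalk : (t 1 : ℤ) + (p.1 - 1) + (p.2 - 1) ≤ t p :=
    add_add_sub_le_of_strictMonoOn_Icc (t := fun q ↦ (t q : ℤ)) hp
      (Nat.strictMono_cast.comp_strictMonoOn ht)
  rw [abs_lt]
  omega

theorem eq_of_modEq_of_abs_sub_lt {n a b : ℤ} (hmod : a ≡ b [ZMOD n]) (hlt : |b - a| < n) :
    a = b :=
  (sub_eq_zero.1 (Int.eq_zero_of_abs_lt_dvd hmod.dvd hlt)).symm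

namespace IsYoungDiagram

variable {lam : Set (ℤ × ℤ)} {p : ℤ × ℤ}

theorem one_le (hlam : IsYoungDiagram lam) (hp : p ∈ lam) : 1 ≤ p :=
  hlam.2.1 p hp

theorem Icc_one_subset (hlam : IsYoungDiagram lam) (hp : p ∈ lam) : Set.Icc 1 p ⊆ lam :=
  fun q hq ↦ hlam.2.2 p hp q.1 q.2 hq.1.1 hq.2.1 hq.1.2 hq.2.2

theorem one_mem (hlam : IsYoungDiagram lam) (hp : p ∈ lam) : 1 ∈ lam :=
  hlam.Icc_one_subset hp (Set.left_mem_Icc.2 (hlam.one_le hp))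

end IsYoungDiagram

namespace IsDisplacementTableau

variable {g : ℕ} {m : ℕ → ℕ} {lam : Set (ℤ × ℤ)} {t : ℤ × ℤ → ℕ} {p : ℤ × ℤ}

theorem strictMonoOn_s6 (ht : IsDisplacementTableau g m lam t) (hlam : IsYoungDiagram lam) :
    StrictMonoOn t lam := by
  obtain ⟨-, hrow, hcol, -⟩ := ht
  intro p hp q hq hpq
  rcases hpq.le.1.eq_or_lt with hx | hx
  · have hy : p.2 < q.2 := hpq.le.2.lt_of_ne fun hy ↦ hpq.ne (Prod.ext hx hy)
    exact hcol p hp q hq hx hy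
  rcases hpq.le.2.eq_or_lt with hy | hy
  · exact hrow p hp q hq hy hx
  · have hcorner : (q.1, p.2) ∈ lam :=
      hlam.Icc_one_subset hq ⟨⟨(hlam.one_le hq).1, (hlam.one_le hp).2⟩, ⟨le_rfl, hpq.le.2⟩⟩
    exact (hrow p hp _ hcorner rfl hx).trans (hcol _ hcorner q hq rfl hy)

theorem strictMonoOn_Icc_one (ht : IsDisplacementTableau g m lam t) (hlam : IsYoungDiagram lam)
    (hp : p ∈ lam) : StrictMonoOn t (Set.Icc 1 p) :=
  (ht.strictMonoOn_s6 hlam).mono (hlam.Icc_one_subset hp)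

theorem one_le_apply_one (ht : IsDisplacementTableau g m lam t) (hlam : IsYoungDiagram lam)
    (hp : p ∈ lam) : 1 ≤ t 1 :=
  (ht.1 1 (hlam.one_mem hp)).1

theorem apply_le (ht : IsDisplacementTableau g m lam t) (hp : p ∈ lam) : t p ≤ g :=
  (ht.1 p hp).2

end IsDisplacementTableau

theorem diag_congruence_implies_equality_general {t t' : ℤ × ℤ → ℕ} {p p' : ℤ × ℤ} {n : ℕ}
    (hp : 1 ≤ p) (hp' : 1 ≤ p')
    (ht : StrictMonoOn t (Set.Icc 1 p)) (ht' : StrictMonoOn t' (Set.Icc 1 p'))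
    (hpos : 1 ≤ t 1) (hpos' : 1 ≤ t' 1) (heq : t p = t' p')
    (hn : 2 ≤ t p → n = 0 ∨ 2 * t p - 2 < n)
    (hcong : 2 ≤ t p → p.1 - p.2 ≡ p'.1 - p'.2 [ZMOD n]) :
    p.1 - p.2 = p'.1 - p'.2 := by
  have hdiag := abs_lt.1 (abs_sub_lt_of_strictMonoOn_Icc_one hp ht hpos)
  have hdiag' := abs_lt.1 (abs_sub_lt_of_strictMonoOn_Icc_one hp' ht' hpos')
  have hdist : |(p'.1 - p'.2) - (p.1 - p.2)| ≤ 2 * t p - 2 := by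
    rw [abs_le]
    omega
  by_cases htwo : 2 ≤ t p
  · rcases hn htwo with rfl | hlarge
    · exact Int.modEq_zero_iff.1 (hcong htwo)
    · exact eq_of_modEq_of_abs_sub_lt (hcong htwo) (by omega)
  · omega

/-- If `t`, `t'` are `m`-displacement tableaux on Young diagrams `λ`,
`μ` for a generic profile `m`, and boxes `(x,y) ∈ λ`, `(x',y') ∈ μ` satisfy
`t(x,y) = t'(x',y')` and (when `t(x,y) ≥ 2`) `x − y ≡ x' − y' (mod m_{t(x,y)})`,
then `x − y = x' − y'`. -/
theorem diag_congruence_implies_equality (g : ℕ) (hg : 2 ≤ g) (m : ℕ → ℕ)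
    (hm : GenericProfile g m)
    (lam mu : Set (ℤ × ℤ)) (hlam : IsYoungDiagram lam) (hmu : IsYoungDiagram mu)
    (t t' : ℤ × ℤ → ℕ)
    (ht : IsDisplacementTableau g m lam t) (ht' : IsDisplacementTableau g m mu t')
    (p p' : ℤ × ℤ) (hp : p ∈ lam) (hp' : p' ∈ mu)
    (heq : t p = t' p')
    (hcong : 2 ≤ t p → Int.ModEq (m (t p) : ℤ) (p.1 - p.2) (p'.1 - p'.2)) :
    p.1 - p.2 = p'.1 - p'.2 := by
  have hbound : t p ≤ g := ht.apply_le hp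
  exact diag_congruence_implies_equality_general (hlam.one_le hp) (hmu.one_le hp')
    (ht.strictMonoOn_Icc_one hlam hp) (ht'.strictMonoOn_Icc_one hmu hp')
    (ht.one_le_apply_one hlam hp) (ht'.one_le_apply_one hmu hp') heq
    (fun htwo ↦ (hm _ htwo hbound).imp_right (lt_of_le_of_lt (by omega))) hcong
end

section
/- Let g ≥ 2, let m = (m_2, …, m_g) be a generic torsion profile, and let 0 ≤ j ≤ r − 1. Let t be an m-displacement tableau on λ^{j+1} and t' an m-displacement tableau on μ_j. Suppose that the image t'(μ_j) is contained in the image t(λ^{j+1}), and that for all boxes (x,y) ∈ λ^{j+1} and (x',y') ∈ μ_j with t(x,y) = t'(x',y') ≥ 2 one has x − y ≡ x' − y' (mod m_{t(x,y)}), where congruence mod 0 means equality. Then t' is the restriction of t to μ_j, i.e., t'(x,y) = t(x,y) for every box (x,y) ∈ μ_j. -/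
/-!
Strict increase along a lattice path from `(1, 1)` to `(x, y)` makes the tableau value at `(x, y)`
at least `x + y - 1`, so it bounds the diagonal `x - y`. For a generic profile the torsion
congruences between equal values are therefore equalities, and every value `t' p` is attained by `t`
at some diagonal translate `p + (k p, k p)`.

Since `t` and `t'` increase strictly, `k` cannot drop along a unit step, so `k` is monotone on `μ`.
It is nonnegative at `(1, 1)`, because the translate stays in the positive quadrant, and nonpositive
at each box `q` with `q + (1, 1) ∉ Λ`. When every box of `μ` lies below such a `q ∈ μ`, we get
`k = 0`. The diagram `μ_j` is a rectangle, and its outermost box is such a `q` for `λ^{j+1}`.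
-/

/-- A Young diagram in the paper's convention: a set of boxes in `ℤ_{>0} × ℤ_{>0}` containing,
with each box `p`, the whole rectangle between `(1, 1)` and `p` in the componentwise order.
Finiteness is not required. -/
structure IsYoungDiagram_s7 (S : Set (ℤ × ℤ)) : Prop where
  one_le : ∀ p ∈ S, 1 ≤ p
  Icc_subset : ∀ p ∈ S, Set.Icc 1 p ⊆ S

namespace IsYoungDiagram_s7

variable {S : Set (ℤ × ℤ)}

theorem mem_of_le (hS : IsYoungDiagram_s7 S) {p q : ℤ × ℤ} (hq : q ∈ S) (hp : 1 ≤ p) (hpq : p ≤ q) :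
    p ∈ S :=
  hS.Icc_subset q hq ⟨hp, hpq⟩

theorem one_mem_s7 (hS : IsYoungDiagram_s7 S) {p : ℤ × ℤ} (hp : p ∈ S) : 1 ∈ S :=
  hS.mem_of_le hp le_rfl (hS.one_le p hp)

theorem ordConnected (hS : IsYoungDiagram_s7 S) : S.OrdConnected :=
  ⟨fun _ hp _ hq _ hz => hS.mem_of_le hq ((hS.one_le _ hp).trans hz.1) hz.2⟩

theorem Icc_one (c : ℤ × ℤ) : IsYoungDiagram_s7 (Set.Icc 1 c) where
  one_le _ hp := hp.1
  Icc_subset _ hp := Set.Icc_subset_Icc_right hp.2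

theorem biUnion {ι : Type*} {I : Set ι} {F : ι → Set (ℤ × ℤ)}
    (hF : ∀ i ∈ I, IsYoungDiagram_s7 (F i)) : IsYoungDiagram_s7 (⋃ i ∈ I, F i) where
  one_le p hp := by
    obtain ⟨i, hi, hpi⟩ := Set.mem_iUnion₂.1 hp
    exact (hF i hi).one_le p hpi
  Icc_subset p hp := by
    obtain ⟨i, hi, hpi⟩ := Set.mem_iUnion₂.1 hp
    exact ((hF i hi).Icc_subset p hpi).trans (Set.subset_biUnion_of_mem hi)

theorem monotoneOn_of_le_add_one {β : Type*} [Preorder β] {f : ℤ × ℤ → β} (hS : IsYoungDiagram_s7 S)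
    (hrow : ∀ x y, (x, y) ∈ S → (x + 1, y) ∈ S → f (x, y) ≤ f (x + 1, y))
    (hcol : ∀ x y, (x, y) ∈ S → (x, y + 1) ∈ S → f (x, y) ≤ f (x, y + 1)) : MonotoneOn f S := by
  rintro ⟨x, y⟩ hp ⟨x', y'⟩ hq ⟨hx : x ≤ x', hy : y ≤ y'⟩
  have hcorner : (x', y) ∈ S := hS.ordConnected.out hp hq ⟨⟨hx, le_rfl⟩, ⟨le_rfl, hy⟩⟩
  have row_connected : {u | (u, y) ∈ S}.OrdConnected :=
    hS.ordConnected.preimage_mono fun _ _ h => ⟨h, le_rfl⟩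
  have col_connected : {v | (x', v) ∈ S}.OrdConnected :=
    hS.ordConnected.preimage_mono fun _ _ h => ⟨le_rfl, h⟩
  calc f (x, y) ≤ f (x', y) :=
        _root_.monotoneOn_of_le_add_one (f := fun u => f (u, y)) row_connected
          (fun u _ => hrow u y) hp hcorner hx
    _ ≤ f (x', y') :=
        _root_.monotoneOn_of_le_add_one (f := fun v => f (x', v)) col_connected
          (fun v _ => hcol x' v) hcorner hq hy

end IsYoungDiagram_s7

/-- `k` records, for each box `p` of `μ`, a diagonal translate `p + (k p, k p)` in `Λ` at which `t`
takes the value `t' p`. -/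
def IsDiagonalShift (Λ μ : Set (ℤ × ℤ)) (t t' : ℤ × ℤ → ℕ) (k : ℤ × ℤ → ℤ) : Prop :=
  ∀ p ∈ μ, p + (k p, k p) ∈ Λ ∧ t (p + (k p, k p)) = t' p

namespace IsDisplacementTableau

variable {g : ℕ} {m : ℕ → ℕ} {S Λ μ : Set (ℤ × ℤ)} {t t' : ℤ × ℤ → ℕ} {k : ℤ × ℤ → ℤ}

theorem lt_right (ht : IsDisplacementTableau g m S t) {x y : ℤ} (hp : (x, y) ∈ S)
    (hq : (x + 1, y) ∈ S) : t (x, y) < t (x + 1, y) :=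
  ht.2.1 _ hp _ hq rfl (lt_add_one x)

theorem lt_up (ht : IsDisplacementTableau g m S t) {x y : ℤ} (hp : (x, y) ∈ S)
    (hq : (x, y + 1) ∈ S) : t (x, y) < t (x, y + 1) :=
  ht.2.2.1 _ hp _ hq rfl (lt_add_one y)

theorem monotoneOn (hS : IsYoungDiagram_s7 S) (ht : IsDisplacementTableau g m S t) :
    MonotoneOn t S :=
  hS.monotoneOn_of_le_add_one (fun _ _ hp hq => (ht.lt_right hp hq).le)
    (fun _ _ hp hq => (ht.lt_up hp hq).le)

theorem monotoneOn_sub_add (hS : IsYoungDiagram_s7 S) (ht : IsDisplacementTableau g m S t) :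
    MonotoneOn (fun p => (t p : ℤ) - (p.1 + p.2)) S := by
  refine hS.monotoneOn_of_le_add_one (fun x y hp hq => ?_) (fun x y hp hq => ?_)
  · have := ht.lt_right hp hq
    dsimp only
    omega
  · have := ht.lt_up hp hq
    dsimp only
    omega

theorem add_sub_one_le (hS : IsYoungDiagram_s7 S) (ht : IsDisplacementTableau g m S t) {p : ℤ × ℤ}
    (hp : p ∈ S) : p.1 + p.2 - 1 ≤ t p := by
  have hone := hS.one_mem_s7 hp
  have hmono : (t 1 : ℤ) - (1 + 1) ≤ t p - (p.1 + p.2) :=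
    ht.monotoneOn_sub_add hS hone hp (hS.one_le p hp)
  have := (ht.1 1 hone).1
  omega

theorem abs_sub_lt (hS : IsYoungDiagram_s7 S) (ht : IsDisplacementTableau g m S t) {p : ℤ × ℤ}
    (hp : p ∈ S) : |p.1 - p.2| < t p := by
  have hhook := ht.add_sub_one_le hS hp
  obtain ⟨hx : 1 ≤ p.1, hy : 1 ≤ p.2⟩ := hS.one_le p hp
  rw [abs_lt]
  omega

theorem sub_eq_sub_of_modEq (hm : GenericProfile g m) (hΛ : IsYoungDiagram_s7 Λ)
    (hμ : IsYoungDiagram_s7 μ) (ht : IsDisplacementTableau g m Λ t)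
    (ht' : IsDisplacementTableau g m μ t') {p q : ℤ × ℤ} (hp : p ∈ Λ) (hq : q ∈ μ)
    (heq : t p = t' q)
    (hmod : 2 ≤ t p → p.1 - p.2 ≡ q.1 - q.2 [ZMOD m (t p)]) : p.1 - p.2 = q.1 - q.2 := by
  obtain ⟨hp_gt, hp_lt⟩ := abs_lt.1 (ht.abs_sub_lt hΛ hp)
  obtain ⟨hq_gt, hq_lt⟩ := abs_lt.1 (ht'.abs_sub_lt hμ hq)
  have hle := (ht.1 p hp).2
  rcases lt_or_ge (t p) 2 with hlt | htwo
  · omega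
  rcases hm _ htwo hle with hzero | hlarge
  · simpa only [hzero, Nat.cast_zero, Int.modEq_zero_iff] using hmod htwo
  · have hclose : |q.1 - q.2 - (p.1 - p.2)| < m (t p) := by
      rw [abs_lt]
      omega
    exact (sub_eq_zero.1 (Int.eq_zero_of_abs_lt_dvd (hmod htwo).dvd hclose)).symm

theorem exists_isDiagonalShift (hm : GenericProfile g m) (hΛ : IsYoungDiagram_s7 Λ)
    (hμ : IsYoungDiagram_s7 μ) (ht : IsDisplacementTableau g m Λ t)
    (ht' : IsDisplacementTableau g m μ t') (himg : ∀ p ∈ μ, ∃ q ∈ Λ, t q = t' p)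
    (hcong : ∀ p ∈ Λ, ∀ q ∈ μ, t p = t' q → 2 ≤ t p →
      p.1 - p.2 ≡ q.1 - q.2 [ZMOD m (t p)]) :
    ∃ k, IsDiagonalShift Λ μ t t' k := by
  choose! s hsΛ hst using himg
  refine ⟨fun p => (s p).1 - p.1, fun p hp => ?_⟩
  have hdiag := ht.sub_eq_sub_of_modEq hm hΛ hμ ht' (hsΛ p hp) hp (hst p hp)
    (hcong _ (hsΛ p hp) p hp (hst p hp))
  have htranslate : p + ((s p).1 - p.1, (s p).1 - p.1) = s p := by
    ext <;> simp only [Prod.fst_add, Prod.snd_add] <;> omega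
  rw [htranslate]
  exact ⟨hsΛ p hp, hst p hp⟩

theorem shift_le_shift (hΛ : IsYoungDiagram_s7 Λ) (ht : IsDisplacementTableau g m Λ t)
    (hk : IsDiagonalShift Λ μ t t' k) {p q : ℤ × ℤ} (hp : p ∈ μ) (hq : q ∈ μ) (hqp : q ≤ p + 1)
    (hlt : t' p < t' q) : k p ≤ k q := by
  by_contra! hdrop
  have htranslate : q + (k q, k q) ≤ p + (k p, k p) := by
    obtain ⟨hx : q.1 ≤ p.1 + 1, hy : q.2 ≤ p.2 + 1⟩ := hqp
    constructor <;> simp only [Prod.fst_add, Prod.snd_add] <;> omega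
  have hle : t' q ≤ t' p := by
    simpa only [(hk p hp).2, (hk q hq).2] using
      ht.monotoneOn hΛ (hk q hq).1 (hk p hp).1 htranslate
  exact hlt.not_ge hle

theorem monotoneOn_shift (hΛ : IsYoungDiagram_s7 Λ) (hμ : IsYoungDiagram_s7 μ)
    (ht : IsDisplacementTableau g m Λ t) (ht' : IsDisplacementTableau g m μ t')
    (hk : IsDiagonalShift Λ μ t t' k) : MonotoneOn k μ :=
  hμ.monotoneOn_of_le_add_one
    (fun _ y hp hq => ht.shift_le_shift hΛ hk hp hq ⟨le_rfl, (lt_add_one y).le⟩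
      (ht'.lt_right hp hq))
    (fun x _ hp hq => ht.shift_le_shift hΛ hk hp hq ⟨(lt_add_one x).le, le_rfl⟩
      (ht'.lt_up hp hq))

end IsDisplacementTableau

namespace IsDiagonalShift

variable {Λ μ : Set (ℤ × ℤ)} {t t' : ℤ × ℤ → ℕ} {k : ℤ × ℤ → ℤ}

theorem apply_one_nonneg (hΛ : IsYoungDiagram_s7 Λ) (hk : IsDiagonalShift Λ μ t t' k) (hone : 1 ∈ μ) :
    0 ≤ k 1 :=
  (le_add_iff_nonneg_right 1).1 (hΛ.one_le _ (hk 1 hone).1).1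

theorem apply_nonpos_of_add_one_notMem (hΛ : IsYoungDiagram_s7 Λ) (hμ : IsYoungDiagram_s7 μ)
    (hk : IsDiagonalShift Λ μ t t' k) {q : ℤ × ℤ} (hq : q ∈ μ) (hcorner : q + 1 ∉ Λ) :
    k q ≤ 0 := by
  by_contra! hpos
  have hquadrant : 1 ≤ q + 1 := (hμ.one_le q hq).trans (le_add_of_nonneg_right zero_le_one)
  have hshift : (1 : ℤ × ℤ) ≤ (k q, k q) := ⟨hpos, hpos⟩
  have hle : q + 1 ≤ q + (k q, k q) := add_le_add_right hshift q
  exact hcorner (hΛ.mem_of_le (hk q hq).1 hquadrant hle)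

end IsDiagonalShift

theorem tableau_restriction_general {g : ℕ} {m : ℕ → ℕ} (hm : GenericProfile g m)
    {Λ μ : Set (ℤ × ℤ)} (hΛ : IsYoungDiagram_s7 Λ) (hμ : IsYoungDiagram_s7 μ)
    (hcorner : ∀ p ∈ μ, ∃ q ∈ μ, p ≤ q ∧ q + 1 ∉ Λ) {t t' : ℤ × ℤ → ℕ}
    (ht : IsDisplacementTableau g m Λ t) (ht' : IsDisplacementTableau g m μ t')
    (himg : ∀ p ∈ μ, ∃ q ∈ Λ, t q = t' p)
    (hcong : ∀ p ∈ Λ, ∀ q ∈ μ, t p = t' q → 2 ≤ t p →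
      p.1 - p.2 ≡ q.1 - q.2 [ZMOD m (t p)]) :
    ∀ p ∈ μ, t' p = t p := by
  obtain ⟨k, hk⟩ := ht.exists_isDiagonalShift hm hΛ hμ ht' himg hcong
  have hmono : MonotoneOn k μ := ht.monotoneOn_shift hΛ hμ ht' hk
  intro p hp
  obtain ⟨q, hq, hpq, hqΛ⟩ := hcorner p hp
  have hone := hμ.one_mem_s7 hp
  have hnonneg : 0 ≤ k p := (hk.apply_one_nonneg hΛ hone).trans (hmono hone hp (hμ.one_le p hp))
  have hnonpos : k p ≤ 0 := (hmono hp hq hpq).trans (hk.apply_nonpos_of_add_one_notMem hΛ hμ hq hqΛ)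
  have hzero : k p = 0 := hnonpos.antisymm hnonneg
  simpa only [hzero, Prod.mk_zero_zero, add_zero] using (hk p hp).2.symm

section Staircase

/-- The union of the rectangles `[1, a i] × [1, b i]` for `i < n`. The paper's `λ^j` is the case
`n = j + 1` with widths `a i = g - d + r + α_i` and heights `b i = r + 1 - i`. -/
def staircase (a b : ℕ → ℤ) (n : ℕ) : Set (ℤ × ℤ) :=
  ⋃ i ∈ Finset.range n, Set.Icc 1 (a i, b i)

theorem isYoungDiagram_staircase (a b : ℕ → ℤ) (n : ℕ) : IsYoungDiagram_s7 (staircase a b n) :=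
  IsYoungDiagram_s7.biUnion fun _ _ => IsYoungDiagram_s7.Icc_one _

variable {a b : ℕ → ℤ} {j n : ℕ} {p : ℤ × ℤ}

theorem mem_staircase : p ∈ staircase a b n ↔ ∃ i < n, p ∈ Set.Icc 1 (a i, b i) := by
  simp only [staircase, Set.mem_iUnion₂, Finset.mem_range, exists_prop]

theorem staircase_inter_Icc (ha : MonotoneOn a (Set.Iic (j + 1)))
    (hb : AntitoneOn b (Set.Iic (j + 1))) :
    staircase a b (j + 1) ∩ Set.Icc 1 (a (j + 1), b (j + 1)) =
      Set.Icc 1 (a j, b (j + 1)) := by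
  have hj : j ∈ Set.Iic (j + 1) := j.le_succ
  have hj' : j + 1 ∈ Set.Iic (j + 1) := Set.mem_Iic.2 le_rfl
  ext p
  rw [Set.mem_inter_iff, mem_staircase]
  constructor
  · rintro ⟨⟨i, hi, hp⟩, hp'⟩
    exact ⟨hp.1, hp.2.1.trans (ha hi.le hj (Nat.lt_succ_iff.1 hi)), hp'.2.2⟩
  · intro hp
    exact ⟨⟨j, j.lt_succ_self, hp.1, hp.2.1, hp.2.2.trans (hb hj hj' j.le_succ)⟩,
      hp.1, hp.2.1.trans (ha hj hj' j.le_succ), hp.2.2⟩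

theorem add_one_notMem_staircase (ha : MonotoneOn a (Set.Iic j)) :
    (a j, b (j + 1)) + 1 ∉ staircase a b (j + 2) := by
  rw [mem_staircase]
  rintro ⟨i, hi, -, hx : a j + 1 ≤ a i, hy : b (j + 1) + 1 ≤ b i⟩
  rcases Nat.lt_succ_iff_lt_or_eq.1 hi with hlt | rfl
  · have := ha (Nat.lt_succ_iff.1 hlt) (Set.mem_Iic.2 le_rfl) (Nat.lt_succ_iff.1 hlt)
    omega
  · omega

theorem tableau_restriction_staircase {g : ℕ} {m : ℕ → ℕ} (hm : GenericProfile g m)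
    (ha : MonotoneOn a (Set.Iic (j + 1))) (hb : AntitoneOn b (Set.Iic (j + 1)))
    {t t' : ℤ × ℤ → ℕ} (ht : IsDisplacementTableau g m (staircase a b (j + 2)) t)
    (ht' : IsDisplacementTableau g m
      (staircase a b (j + 1) ∩ Set.Icc 1 (a (j + 1), b (j + 1))) t')
    (himg : ∀ p ∈ staircase a b (j + 1) ∩ Set.Icc 1 (a (j + 1), b (j + 1)),
      ∃ q ∈ staircase a b (j + 2), t q = t' p)
    (hcong : ∀ p ∈ staircase a b (j + 2),
      ∀ q ∈ staircase a b (j + 1) ∩ Set.Icc 1 (a (j + 1), b (j + 1)),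
      t p = t' q → 2 ≤ t p → p.1 - p.2 ≡ q.1 - q.2 [ZMOD m (t p)]) :
    ∀ p ∈ staircase a b (j + 1) ∩ Set.Icc 1 (a (j + 1), b (j + 1)), t' p = t p := by
  rw [staircase_inter_Icc ha hb] at ht' himg hcong ⊢
  have hcorner : (a j, b (j + 1)) + 1 ∉ staircase a b (j + 2) :=
    add_one_notMem_staircase (ha.mono (Set.Iic_subset_Iic.2 j.le_succ))
  exact tableau_restriction_general hm (isYoungDiagram_staircase a b (j + 2))
    (IsYoungDiagram_s7.Icc_one _)
    (fun p hp => ⟨_, ⟨hp.1.trans hp.2, le_rfl⟩, hp.2, hcorner⟩) ht ht' himg hcong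

end Staircase

/-- Let `m` be a generic torsion profile, `t` an `m`-displacement
tableau on `λ^{j+1}` and `t'` an `m`-displacement tableau on `μ_j`.  If
`t'(μ_j) ⊆ t(λ^{j+1})` and for all boxes `(x,y) ∈ λ^{j+1}`, `(x',y') ∈ μ_j` with
`t(x,y) = t'(x',y') ≥ 2` one has `x − y ≡ x' − y' (mod m_{t(x,y)})`, then `t'` is the
restriction of `t` to `μ_j`. -/
theorem tableau_restriction (g : ℕ) (hg : 2 ≤ g) (m : ℕ → ℕ) (hm : GenericProfile g m)
    (d : ℤ) (r : ℕ) (hrd : (r : ℤ) ≤ d) (hgdr : 0 ≤ (g : ℤ) - d + r)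
    (α : ℕ → ℤ) (hαmono : ∀ i j : ℕ, i ≤ j → j ≤ r → α i ≤ α j)
    (hαbd : ∀ i : ℕ, i ≤ r → 0 ≤ α i ∧ α i ≤ d - r)
    (lam : ℕ → Set (ℤ × ℤ))
    (hlam : ∀ i : ℕ, lam i =
      {p : ℤ × ℤ | 1 ≤ p.1 ∧ 1 ≤ p.2 ∧ p.1 ≤ (g : ℤ) - d + r + α i ∧ p.2 ≤ (r : ℤ) + 1 - i})
    (j : ℕ) (hj : j + 1 ≤ r)
    (Λ μ : Set (ℤ × ℤ))
    (hΛ : Λ = ⋃ i ∈ Finset.range (j + 2), lam i)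
    (hμ : μ = (⋃ i ∈ Finset.range (j + 1), lam i) ∩ lam (j + 1))
    (t t' : ℤ × ℤ → ℕ)
    (ht : IsDisplacementTableau g m Λ t) (ht' : IsDisplacementTableau g m μ t')
    (himg : ∀ p ∈ μ, ∃ q ∈ Λ, t q = t' p)
    (hcong : ∀ p ∈ Λ, ∀ q ∈ μ, t p = t' q → 2 ≤ t p →
      Int.ModEq (m (t p) : ℤ) (p.1 - p.2) (q.1 - q.2)) :
    ∀ p ∈ μ, t' p = t p := by
  have hwidth : MonotoneOn (fun i => (g : ℤ) - d + r + α i) (Set.Iic (j + 1)) :=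
    fun i _ i' hi' hii' => add_le_add_right (hαmono i i' hii' (hi'.trans hj)) _
  have hheight : AntitoneOn (fun i : ℕ => (r : ℤ) + 1 - i) (Set.Iic (j + 1)) :=
    fun i _ i' _ hii' => sub_le_sub_left (Nat.cast_le.2 hii') _
  obtain rfl : lam = fun i : ℕ => Set.Icc 1 ((g : ℤ) - d + r + α i, (r : ℤ) + 1 - i) := by
    ext i p
    simp only [hlam, Set.mem_ofPred_eq, Set.mem_Icc, Prod.le_def, Prod.fst_one, Prod.snd_one,
      and_assoc]
  subst hΛ hμ
  exact tableau_restriction_staircase hm hwidth hheight ht ht' himg hcong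
end

section
/- Let g ≥ 2, let m = (m_2, …, m_g) be a generic torsion profile, let 0 ≤ j ≤ r − 1, and let t be an m-displacement tableau on λ^{j+1}. Then there is exactly one m-displacement tableau t' on μ_j such that t'(μ_j) ⊆ t(λ^{j+1}) and such that for all boxes (x,y) ∈ λ^{j+1} and (x',y') ∈ μ_j with t(x,y) = t'(x',y') ≥ 2 one has x − y ≡ x' − y' (mod m_{t(x,y)}) (congruence mod 0 meaning equality); namely, t' is the restriction of t to μ_j, which is itself an m-displacement tableau on μ_j. -/
/-!
Since `t` grows strictly along rows and columns, a box `p` of a Young diagram satisfies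
`|p.1 - p.2| < t p`, so for a generic profile the congruences between diagonals are equalities.
Hence `t' p = t (p + (k, k))` for some integer `k`, depending on `p`. By induction on `t' p`,
comparing `p` with its left neighbour, `k` is never negative, i.e. `t ≤ t'`. By induction on
`g - t' p`, comparing `p` with its right or upper neighbour in `μ`, `k` is never positive, i.e.
`t' ≤ t`; the induction starts at the corners of `μ`, none of which can be moved diagonally
inside `Λ`.
-/

/-- A Young diagram, possibly infinite: a set of boxes in the positive quadrant that is closed
under passing to smaller boxes. Here `1 : ℤ × ℤ` is the box `(1, 1)` and `≤` is the product
order. -/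
structure IsYoungDiagram_s8 (S : Set (ℤ × ℤ)) : Prop where
  one_le : ∀ p ∈ S, 1 ≤ p
  mem_of_le : ∀ q ∈ S, ∀ p, 1 ≤ p → p ≤ q → p ∈ S

/-- Every corner of `μ` lies on the rim of `Λ`: a box of `μ` that has neither a right nor an upper
neighbour in `μ` has no diagonal successor in `Λ`. -/
def CornersOnRim (μ Λ : Set (ℤ × ℤ)) : Prop :=
  ∀ p ∈ μ, p + 1 ∈ Λ → p + (1, 0) ∈ μ ∨ p + (0, 1) ∈ μ

section Shapes

theorem isYoungDiagram_Icc (c : ℤ × ℤ) : IsYoungDiagram_s8 (Set.Icc 1 c) where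
  one_le _ hp := hp.1
  mem_of_le _ hq _ hp hpq := ⟨hp, hpq.trans hq.2⟩

theorem IsYoungDiagram_s8.inter {S T : Set (ℤ × ℤ)} (hS : IsYoungDiagram_s8 S) (hT : IsYoungDiagram_s8 T) :
    IsYoungDiagram_s8 (S ∩ T) where
  one_le p hp := hS.one_le p hp.1
  mem_of_le q hq p hp hpq := ⟨hS.mem_of_le q hq.1 p hp hpq, hT.mem_of_le q hq.2 p hp hpq⟩

theorem IsYoungDiagram_s8.union {S T : Set (ℤ × ℤ)} (hS : IsYoungDiagram_s8 S) (hT : IsYoungDiagram_s8 T) :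
    IsYoungDiagram_s8 (S ∪ T) where
  one_le p := Or.rec (hS.one_le p) (hT.one_le p)
  mem_of_le q hq p hp hpq :=
    hq.imp (hS.mem_of_le q · p hp hpq) (hT.mem_of_le q · p hp hpq)

theorem isYoungDiagram_biUnion {ι : Type*} {s : Finset ι} {S : ι → Set (ℤ × ℤ)}
    (hS : ∀ i ∈ s, IsYoungDiagram_s8 (S i)) : IsYoungDiagram_s8 (⋃ i ∈ s, S i) where
  one_le p hp := by
    obtain ⟨i, hi, hpi⟩ := Set.mem_iUnion₂.1 hp
    exact (hS i hi).one_le p hpi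
  mem_of_le q hq p hp hpq := by
    obtain ⟨i, hi, hqi⟩ := Set.mem_iUnion₂.1 hq
    exact Set.mem_iUnion₂.2 ⟨i, hi, (hS i hi).mem_of_le q hqi p hp hpq⟩

theorem cornersOnRim_biUnion_Icc_inter_Icc {ι : Type*} {s : Finset ι} {c : ι → ℤ × ℤ} {b : ℤ × ℤ}
    (hfst : ∀ i ∈ s, (c i).1 ≤ b.1) (hsnd : ∀ i ∈ s, b.2 ≤ (c i).2) :
    CornersOnRim ((⋃ i ∈ s, Set.Icc 1 (c i)) ∩ Set.Icc 1 b)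
      (Set.Icc 1 b ∪ ⋃ i ∈ s, Set.Icc 1 (c i)) := by
  rintro p ⟨hp, hpb⟩ (hsucc | hsucc)
  · obtain ⟨i, hi, hpi⟩ := Set.mem_iUnion₂.1 hp
    have hbi := hsnd i hi
    refine Or.inr ⟨Set.mem_iUnion₂.2 ⟨i, hi, ?_⟩, ?_⟩ <;>
    · simp only [Set.mem_Icc, Prod.le_def, Prod.fst_add, Prod.snd_add, Prod.fst_one,
        Prod.snd_one] at hpi hsucc ⊢
      omega
  · obtain ⟨i, hi, hsucc⟩ := Set.mem_iUnion₂.1 hsucc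
    have hib := hfst i hi
    refine Or.inl ⟨Set.mem_iUnion₂.2 ⟨i, hi, ?_⟩, ?_⟩ <;>
    · simp only [Set.mem_Icc, Prod.le_def, Prod.fst_add, Prod.snd_add, Prod.fst_one,
        Prod.snd_one] at hpb hsucc ⊢
      omega

end Shapes

section Tableaux

variable {g : ℕ} {m : ℕ → ℕ} {S : Set (ℤ × ℤ)} {t : ℤ × ℤ → ℕ}

theorem IsDisplacementTableau.mono {T : Set (ℤ × ℤ)} (ht : IsDisplacementTableau g m S t)
    (hTS : T ⊆ S) : IsDisplacementTableau g m T t := by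
  obtain ⟨hrange, hrow, hcol, hdiag⟩ := ht
  exact ⟨fun p hp => hrange p (hTS hp), fun p hp q hq => hrow p (hTS hp) q (hTS hq),
    fun p hp q hq => hcol p (hTS hp) q (hTS hq), fun p hp q hq => hdiag p (hTS hp) q (hTS hq)⟩

theorem IsDisplacementTableau.strictMonoOn_s8 (ht : IsDisplacementTableau g m S t)
    (hS : IsYoungDiagram_s8 S) : StrictMonoOn t S := by
  obtain ⟨-, hrow, hcol, -⟩ := ht
  rintro ⟨x, y⟩ hp ⟨x', y'⟩ hq hpq
  obtain ⟨hx, hy⟩ : x ≤ x' ∧ y ≤ y' := hpq.le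
  have hcorner : (x', y) ∈ S :=
    hS.mem_of_le _ hq _ ⟨(hS.one_le _ hq).1, (hS.one_le _ hp).2⟩ ⟨le_rfl, hy⟩
  rcases hx.eq_or_lt with rfl | hx <;> rcases hy.eq_or_lt with rfl | hy
  · exact absurd hpq (lt_irrefl _)
  · exact hcol _ hp _ hq rfl hy
  · exact hrow _ hp _ hq rfl hx
  · exact (hrow _ hp _ hcorner rfl hx).trans (hcol _ hcorner _ hq rfl hy)

theorem IsYoungDiagram_s8.fst_add_snd_le_of_strictMonoOn (hS : IsYoungDiagram_s8 S)
    (ht : StrictMonoOn t S) (hpos : ∀ p ∈ S, 1 ≤ t p) {p : ℤ × ℤ} (hp : p ∈ S) :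
    p.1 + p.2 ≤ t p + 1 := by
  induction hn : t p using Nat.strong_induction_on generalizing p with
  | _ n ih =>
    subst hn
    have via_smaller : ∀ q, 1 ≤ q → q < p → p.1 + p.2 = q.1 + q.2 + 1 → p.1 + p.2 ≤ t p + 1 := by
      intro q hq hqp hsum
      have hqS := hS.mem_of_le p hp q hq hqp.le
      have htq := ht hqS hp hqp
      have := ih _ htq hqS rfl
      omega
    obtain ⟨x, y⟩ := p
    obtain ⟨hx, hy⟩ : 1 ≤ x ∧ 1 ≤ y := hS.one_le _ hp
    rcases hx.eq_or_lt with rfl | hx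
    · rcases hy.eq_or_lt with rfl | hy
      · have := hpos _ hp
        dsimp only
        omega
      · exact via_smaller (1, y - 1) ⟨le_rfl, Int.le_sub_one_of_lt hy⟩
          (Prod.mk_lt_mk_iff_right.2 (sub_one_lt y)) (by ring)
    · exact via_smaller (x - 1, y) ⟨Int.le_sub_one_of_lt hx, hy⟩
        (Prod.mk_lt_mk_iff_left.2 (sub_one_lt x)) (by ring)

theorem IsDisplacementTableau.abs_fst_sub_snd_lt (ht : IsDisplacementTableau g m S t)
    (hS : IsYoungDiagram_s8 S) {p : ℤ × ℤ} (hp : p ∈ S) : |p.1 - p.2| < t p := by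
  have hsum := hS.fst_add_snd_le_of_strictMonoOn (ht.strictMonoOn_s8 hS) (fun q hq => (ht.1 q hq).1) hp
  obtain ⟨hx, hy⟩ : 1 ≤ p.1 ∧ 1 ≤ p.2 := hS.one_le p hp
  rw [abs_lt]
  omega

theorem GenericProfile.eq_of_modEq (hm : GenericProfile g m) {i : ℕ} (hi : 2 ≤ i) (hig : i ≤ g)
    {a b : ℤ} (ha : |a| < i) (hb : |b| < i) (hab : a ≡ b [ZMOD m i]) : a = b := by
  rcases hm i hi hig with hzero | hlarge
  · rwa [hzero, Nat.cast_zero, Int.modEq_zero_iff] at hab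
  · have hsmall : |b - a| < m i := by
      rw [abs_lt] at *
      omega
    exact (sub_eq_zero.1 (Int.eq_zero_of_abs_lt_dvd hab.dvd hsmall)).symm

theorem IsDisplacementTableau.diagonal_eq_of_modEq {T : Set (ℤ × ℤ)} {t' : ℤ × ℤ → ℕ}
    (hm : GenericProfile g m) (hS : IsYoungDiagram_s8 S) (hT : IsYoungDiagram_s8 T)
    (ht : IsDisplacementTableau g m S t) (ht' : IsDisplacementTableau g m T t')
    {q p : ℤ × ℤ} (hq : q ∈ S) (hp : p ∈ T) (hqp : t q = t' p)
    (hmod : 2 ≤ t q → q.1 - q.2 ≡ p.1 - p.2 [ZMOD m (t q)]) : q.1 - q.2 = p.1 - p.2 := by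
  have hqlt := ht.abs_fst_sub_snd_lt hS hq
  have hplt := ht'.abs_fst_sub_snd_lt hT hp
  rw [← hqp] at hplt
  rcases lt_or_ge (t q) 2 with hone | htwo
  · rw [abs_lt] at hqlt hplt
    omega
  · exact hm.eq_of_modEq htwo (ht.1 q hq).2 hqlt hplt (hmod htwo)

end Tableaux

section Comparison

variable {Λ μ : Set (ℤ × ℤ)} {t t' : ℤ × ℤ → ℕ}

theorem le_or_add_one_le_of_diagonal_eq {p q : ℤ × ℤ} (h : q.1 - q.2 = p.1 - p.2) :
    p ≤ q ∨ q + 1 ≤ p := by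
  simp only [Prod.le_def, Prod.fst_add, Prod.snd_add, Prod.fst_one, Prod.snd_one]
  omega

theorem le_of_occurs_on_diagonal (hΛ : IsYoungDiagram_s8 Λ) (hμ : IsYoungDiagram_s8 μ) (hμΛ : μ ⊆ Λ)
    (ht : MonotoneOn t Λ) (ht' : StrictMonoOn t' μ)
    (hoccurs : ∀ p ∈ μ, ∃ q ∈ Λ, t q = t' p ∧ q.1 - q.2 = p.1 - p.2) {p : ℤ × ℤ} (hp : p ∈ μ) :
    t p ≤ t' p := by
  induction hn : t' p using Nat.strong_induction_on generalizing p with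
  | _ n ih =>
    subst hn
    obtain ⟨q, hq, hqp, hdiag⟩ := hoccurs p hp
    rcases le_or_add_one_le_of_diagonal_eq hdiag with hle | hlt
    · exact (ht (hμΛ hp) hq hle).trans_eq hqp
    obtain ⟨x, y⟩ := p
    have hq_left : q ≤ (x - 1, y) := ⟨le_sub_right_of_add_le hlt.1, (lt_add_one _).le.trans hlt.2⟩
    have left_lt : (x - 1, y) < (x, y) := Prod.mk_lt_mk_iff_left.2 (sub_one_lt x)
    have hleft : (x - 1, y) ∈ μ :=
      hμ.mem_of_le _ hp _ ((hΛ.one_le q hq).trans hq_left) left_lt.le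
    have : t' (x, y) < t' (x, y) :=
      calc t' (x, y) = t q := hqp.symm
        _ ≤ t (x - 1, y) := ht hq (hμΛ hleft) hq_left
        _ ≤ t' (x - 1, y) := ih _ (ht' hleft hp left_lt) hleft rfl
        _ < t' (x, y) := ht' hleft hp left_lt
    exact absurd this (lt_irrefl _)

theorem CornersOnRim.exists_gt_le_add_one (h : CornersOnRim μ Λ) {p : ℤ × ℤ} (hp : p ∈ μ)
    (hsucc : p + 1 ∈ Λ) : ∃ p' ∈ μ, p < p' ∧ p' ≤ p + 1 := by
  rcases h p hp hsucc with hright | hup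
  · exact ⟨_, hright, lt_add_of_pos_right p (by simp [Prod.lt_iff]), add_le_add_right (by decide) p⟩
  · exact ⟨_, hup, lt_add_of_pos_right p (by simp [Prod.lt_iff]), add_le_add_right (by decide) p⟩

theorem CornersOnRim.ge_of_occurs_on_diagonal {g : ℕ} (hcorner : CornersOnRim μ Λ)
    (hΛ : IsYoungDiagram_s8 Λ) (hμΛ : μ ⊆ Λ)
    (ht : MonotoneOn t Λ) (ht' : StrictMonoOn t' μ) (hbdd : ∀ p ∈ μ, t' p ≤ g)
    (hoccurs : ∀ p ∈ μ, ∃ q ∈ Λ, t q = t' p ∧ q.1 - q.2 = p.1 - p.2) {p : ℤ × ℤ} (hp : p ∈ μ) :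
    t' p ≤ t p := by
  induction hn : g - t' p using Nat.strong_induction_on generalizing p with
  | _ n ih =>
    subst hn
    obtain ⟨q, hq, hqp, hdiag⟩ := hoccurs p hp
    rcases le_or_add_one_le_of_diagonal_eq hdiag.symm with hle | hlt
    · exact hqp.symm.trans_le (ht hq (hμΛ hp) hle)
    have one_le_succ : 1 ≤ p + 1 :=
      (hΛ.one_le p (hμΛ hp)).trans (le_add_of_nonneg_right zero_le_one)
    have hsucc : p + 1 ∈ Λ := hΛ.mem_of_le q hq _ one_le_succ hlt
    obtain ⟨p', hp', hpp', hp'succ⟩ := hcorner.exists_gt_le_add_one hp hsucc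
    have ht'lt := ht' hp hp' hpp'
    have hcloser : g - t' p' < g - t' p := by
      have := hbdd p' hp'
      omega
    have : t' p' < t' p' :=
      calc t' p' ≤ t p' := ih _ hcloser hp' rfl
        _ ≤ t q := ht (hμΛ hp') hq (hp'succ.trans hlt)
        _ = t' p := hqp
        _ < t' p' := ht'lt
    exact absurd this (lt_irrefl _)

end Comparison

theorem tableau_restriction_unique_general {g : ℕ} {m : ℕ → ℕ} (hm : GenericProfile g m)
    {Λ μ : Set (ℤ × ℤ)} (hΛ : IsYoungDiagram_s8 Λ) (hμ : IsYoungDiagram_s8 μ) (hμΛ : μ ⊆ Λ)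
    (hcorner : CornersOnRim μ Λ) {t : ℤ × ℤ → ℕ} (ht : IsDisplacementTableau g m Λ t) :
    (IsDisplacementTableau g m μ t ∧
      (∀ p ∈ μ, ∃ q ∈ Λ, t q = t p) ∧
      (∀ p ∈ Λ, ∀ q ∈ μ, t p = t q → 2 ≤ t p → p.1 - p.2 ≡ q.1 - q.2 [ZMOD m (t p)])) ∧
    (∀ t' : ℤ × ℤ → ℕ, IsDisplacementTableau g m μ t' →
      (∀ p ∈ μ, ∃ q ∈ Λ, t q = t' p) →
      (∀ p ∈ Λ, ∀ q ∈ μ, t p = t' q → 2 ≤ t p → p.1 - p.2 ≡ q.1 - q.2 [ZMOD m (t p)]) →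
      ∀ p ∈ μ, t' p = t p) := by
  refine ⟨⟨ht.mono hμΛ, fun p hp => ⟨p, hμΛ hp, rfl⟩,
    fun p hp q hq => ht.2.2.2 p hp q (hμΛ hq)⟩, fun t' ht' himage hmod p hp => ?_⟩
  have hoccurs : ∀ p ∈ μ, ∃ q ∈ Λ, t q = t' p ∧ q.1 - q.2 = p.1 - p.2 := by
    intro p hp
    obtain ⟨q, hq, hqp⟩ := himage p hp
    exact ⟨q, hq, hqp, ht.diagonal_eq_of_modEq hm hΛ hμ ht' hq hp hqp (hmod q hq p hp hqp)⟩
  have hmono := (ht.strictMonoOn_s8 hΛ).monotoneOn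
  have hstrict := ht'.strictMonoOn_s8 hμ
  exact le_antisymm
    (hcorner.ge_of_occurs_on_diagonal hΛ hμΛ hmono hstrict (fun p hp => (ht'.1 p hp).2)
      hoccurs hp)
    (le_of_occurs_on_diagonal hΛ hμ hμΛ hmono hstrict hoccurs hp)

/-- Let `m` be a generic torsion profile and `t` an `m`-displacement
tableau on `λ^{j+1}`.  Then there is exactly one `m`-displacement tableau `t'` on
`μ_j` with `t'(μ_j) ⊆ t(λ^{j+1})` and with `x − y ≡ x' − y' (mod m_{t(x,y)})` whenever
`(x,y) ∈ λ^{j+1}`, `(x',y') ∈ μ_j` and `t(x,y) = t'(x',y') ≥ 2`: namely the restriction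
of `t` to `μ_j`, which is itself an `m`-displacement tableau on `μ_j`. -/
theorem tableau_restriction_unique (g : ℕ) (hg : 2 ≤ g) (m : ℕ → ℕ) (hm : GenericProfile g m)
    (d : ℤ) (r : ℕ) (hrd : (r : ℤ) ≤ d) (hgdr : 0 ≤ (g : ℤ) - d + r)
    (α : ℕ → ℤ) (hαmono : ∀ i j : ℕ, i ≤ j → j ≤ r → α i ≤ α j)
    (hαbd : ∀ i : ℕ, i ≤ r → 0 ≤ α i ∧ α i ≤ d - r)
    (lam : ℕ → Set (ℤ × ℤ))
    (hlam : ∀ i : ℕ, lam i =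
      {p : ℤ × ℤ | 1 ≤ p.1 ∧ 1 ≤ p.2 ∧ p.1 ≤ (g : ℤ) - d + r + α i ∧ p.2 ≤ (r : ℤ) + 1 - i})
    (j : ℕ) (hj : j + 1 ≤ r)
    (Λ μ : Set (ℤ × ℤ))
    (hΛ : Λ = ⋃ i ∈ Finset.range (j + 2), lam i)
    (hμ : μ = (⋃ i ∈ Finset.range (j + 1), lam i) ∩ lam (j + 1))
    (t : ℤ × ℤ → ℕ) (ht : IsDisplacementTableau g m Λ t) :
    (IsDisplacementTableau g m μ t ∧
      (∀ p ∈ μ, ∃ q ∈ Λ, t q = t p) ∧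
      (∀ p ∈ Λ, ∀ q ∈ μ, t p = t q → 2 ≤ t p →
        Int.ModEq (m (t p) : ℤ) (p.1 - p.2) (q.1 - q.2))) ∧
    (∀ t' : ℤ × ℤ → ℕ, IsDisplacementTableau g m μ t' →
      (∀ p ∈ μ, ∃ q ∈ Λ, t q = t' p) →
      (∀ p ∈ Λ, ∀ q ∈ μ, t p = t' q → 2 ≤ t p →
        Int.ModEq (m (t p) : ℤ) (p.1 - p.2) (q.1 - q.2)) →
      ∀ p ∈ μ, t' p = t p) := by
  obtain rfl : lam = fun i : ℕ => Set.Icc 1 ((g : ℤ) - d + r + α i, (r : ℤ) + 1 - i) := by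
    ext i p
    simp only [hlam, Set.mem_ofPred_eq, Set.mem_Icc, Prod.le_def, Prod.fst_one, Prod.snd_one,
      and_assoc]
  rw [Finset.range_add_one, Finset.set_biUnion_insert] at hΛ
  subst hΛ hμ
  have hprev : IsYoungDiagram_s8 (⋃ i ∈ Finset.range (j + 1),
      Set.Icc (1 : ℤ × ℤ) ((g : ℤ) - d + r + α i, (r : ℤ) + 1 - i)) :=
    isYoungDiagram_biUnion fun i _ => isYoungDiagram_Icc _
  refine tableau_restriction_unique_general hm ((isYoungDiagram_Icc _).union hprev)
    (hprev.inter (isYoungDiagram_Icc _)) (fun p hp => Or.inl hp.2)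
    (cornersOnRim_biUnion_Icc_inter_Icc (fun i hi => ?_) fun i hi => ?_) ht
  · have := hαmono i (j + 1) (Finset.mem_range.1 hi).le hj
    dsimp only
    omega
  · have := Finset.mem_range.1 hi
    dsimp only
    omega
end
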